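/- arXiv:2311.06103 — 4 statements merged into one kernel-verified Lean document; each statement's English description precedes it below -/
import Mathlib

section
/- Let θ, b ∈ ℝᵏ with ‖θ‖₂ ≤ 1 and define v: ℝ → ℝᵏ by v(x) = xθ + b. Let S ⊆ {1, …, k} and define w: ℝ → ℝᵏ by w(x)_i = |v(x)_i| for i ∈ S and w(x)_i = v(x)_i for i ∉ S. Suppose t ∈ S satisfies θ_t ≠ 0 and x₀ ∈ ℝ satisfies v(x₀)_t = 0. Then for every δ ∈ ℝ: ‖w(x₀ + δ/2) − w(x₀ − δ/2)‖₂² ≤ ‖v(x₀ + δ/2) − v(x₀ − δ/2)‖₂² − (θ_t δ)² ≤ (1 − θ_t²) δ². -/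
/-!
Each coordinate of the increment of `v` is `θ i * δ`. Since `||a| - |b|| ≤ |a - b|`, no coordinate
of the increment of `w` is larger in absolute value. In coordinate `t` the points `x₀ ± δ / 2` are
symmetric about the zero of the affine function `v · t`, so its two values are opposite, their
absolute values agree, and the whole contribution `(θ t * δ) ^ 2` disappears. The second inequality
is `‖θ‖ ^ 2 ≤ 1`.
-/

noncomputable section

/-- **Key inequality for absolute-value pre-activations.** For `v(x) = xθ + b` with
`‖θ‖₂ ≤ 1` and `w` obtained from `v` by taking absolute values on the coordinates in `S`:
if `t ∈ S`, `θ_t ≠ 0` and `v(x₀)_t = 0`, then for every `δ`,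
`‖w(x₀+δ/2) − w(x₀−δ/2)‖² ≤ ‖v(x₀+δ/2) − v(x₀−δ/2)‖² − (θ_t δ)² ≤ (1 − θ_t²) δ²`. -/
theorem abs_layer_contracts {k : ℕ} (θ b : EuclideanSpace ℝ (Fin k)) (hθ : ‖θ‖ ≤ 1)
    (S : Finset (Fin k)) (v w : ℝ → EuclideanSpace ℝ (Fin k))
    (hv : ∀ x i, v x i = x * θ i + b i)
    (hw : ∀ x i, w x i = if i ∈ S then |v x i| else v x i)
    (t : Fin k) (ht : t ∈ S) (hθt : θ t ≠ 0)
    (x₀ : ℝ) (hx₀ : v x₀ t = 0) (δ : ℝ) :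
    ‖w (x₀ + δ / 2) - w (x₀ - δ / 2)‖ ^ 2 ≤
        ‖v (x₀ + δ / 2) - v (x₀ - δ / 2)‖ ^ 2 - (θ t * δ) ^ 2 ∧
      ‖v (x₀ + δ / 2) - v (x₀ - δ / 2)‖ ^ 2 - (θ t * δ) ^ 2 ≤ (1 - θ t ^ 2) * δ ^ 2 := by
  have hvd : ∀ i, (v (x₀ + δ / 2) - v (x₀ - δ / 2)) i = θ i * δ := fun i => by
    rw [PiLp.sub_apply, hv, hv]; ring
  have hcontr : ∀ i, ((w (x₀ + δ / 2) - w (x₀ - δ / 2)) i) ^ 2 ≤ (θ i * δ) ^ 2 := fun i => by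
    rw [← hvd i, PiLp.sub_apply, PiLp.sub_apply, hw, hw]
    split_ifs
    · exact sq_le_sq.2 (abs_abs_sub_abs_le_abs_sub _ _)
    · exact le_rfl
  have hzero : (w (x₀ + δ / 2) - w (x₀ - δ / 2)) t = 0 := by
    have hsymm : v (x₀ + δ / 2) t = -v (x₀ - δ / 2) t := by
      rw [hv] at hx₀ ⊢
      rw [hv]
      linear_combination 2 * hx₀
    rw [PiLp.sub_apply, hw, hw, if_pos ht, if_pos ht, hsymm, abs_neg, sub_self]
  have hvn : ‖v (x₀ + δ / 2) - v (x₀ - δ / 2)‖ ^ 2 = ∑ i, (θ i * δ) ^ 2 := by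
    simp only [EuclideanSpace.real_norm_sq_eq, hvd]
  have hθn : ∑ i, (θ i * δ) ^ 2 = ‖θ‖ ^ 2 * δ ^ 2 := by
    simp only [EuclideanSpace.real_norm_sq_eq, mul_pow, Finset.sum_mul]
  rw [hvn]
  constructor
  · rw [EuclideanSpace.real_norm_sq_eq, ← Finset.add_sum_erase _ _ (Finset.mem_univ t),
      ← Finset.add_sum_erase _ (fun i => (θ i * δ) ^ 2) (Finset.mem_univ t), hzero]
    have := Finset.sum_le_sum (s := Finset.univ.erase t) fun i _ => hcontr i
    linarith
  · have : ‖θ‖ ^ 2 * δ ^ 2 ≤ 1 * δ ^ 2 := by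
      gcongr
      exact pow_le_one₀ (norm_nonneg θ) hθ
    rw [hθn]
    linarith [mul_pow (θ t) δ 2]

end
end

section
/- Let θ, b ∈ ℝᵏ with ‖θ‖₂ ≤ 1 and define v: ℝ → ℝᵏ by v(x) = xθ + b. Let S ⊆ {1, …, k} and define w: ℝ → ℝᵏ by w(x)_i = |v(x)_i| for i ∈ S and w(x)_i = v(x)_i for i ∉ S. Suppose t ∈ S satisfies θ_t ≠ 0, x₀ ∈ ℝ satisfies v(x₀)_t = 0, and F: ℝᵏ → ℝ is 1-Lipschitz. Then the function f = F ∘ w satisfies, for every δ ∈ ℝ: (f(x₀ + δ/2) − f(x₀ − δ/2))² ≤ (1 − θ_t²) δ². In particular f cannot equal the N-function, since (N(x₀ + δ/2) − N(x₀ − δ/2))²/δ² → 1 as δ → ∞. -/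
/-!
The coordinate `t` of `v` is an odd function of `x - x₀`, so after taking the absolute value the
points `x₀ + δ/2` and `x₀ - δ/2` have the same `t`-th coordinate under `w`. The other coordinates
move by at most `|δ θ_i|`, because the absolute value is 1-Lipschitz. Hence
`‖w (x₀ + δ/2) - w (x₀ - δ/2)‖² ≤ δ² (‖θ‖² - θ_t²)`, and the Lipschitz bound for `F` gives the
inequality. For the N-function and large `δ` the left-hand side is `(δ - 2)²`, so the inequality
would force `θ_t² δ ≤ 4` for all large `δ`, which fails since `θ_t ≠ 0`.
-/

noncomputable section

/-- The N-function. -/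
def Nfun (x : ℝ) : ℝ :=
  if x ≤ -(1/2 : ℝ) then x + 1 else if x ≤ (1/2 : ℝ) then -x else x - 1

/-- For `v(x) = xθ + b` with `‖θ‖₂ ≤ 1`, `w` obtained from `v` by taking absolute values on
the coordinates in `S`, `t ∈ S` with `θ_t ≠ 0`, `v(x₀)_t = 0` and `F : ℝᵏ → ℝ` 1-Lipschitz,
the function `f = F ∘ w` satisfies `(f(x₀+δ/2) − f(x₀−δ/2))² ≤ (1 − θ_t²) δ²` for all `δ`;
in particular `f` cannot equal the N-function. -/
theorem lipschitz_comp_abs_layer_bound {k : ℕ}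
    (θ b : EuclideanSpace ℝ (Fin k)) (hθ : ‖θ‖ ≤ 1)
    (S : Finset (Fin k)) (v w : ℝ → EuclideanSpace ℝ (Fin k))
    (hv : ∀ x i, v x i = x * θ i + b i)
    (hw : ∀ x i, w x i = if i ∈ S then |v x i| else v x i)
    (t : Fin k) (ht : t ∈ S) (hθt : θ t ≠ 0)
    (x₀ : ℝ) (hx₀ : v x₀ t = 0)
    (F : EuclideanSpace ℝ (Fin k) → ℝ) (hF : LipschitzWith 1 F)
    (f : ℝ → ℝ) (hf : ∀ x, f x = F (w x)) :
    (∀ δ : ℝ, (f (x₀ + δ / 2) - f (x₀ - δ / 2)) ^ 2 ≤ (1 - θ t ^ 2) * δ ^ 2) ∧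
      ¬ (∀ x, f x = Nfun x) := by
  have key : ∀ δ : ℝ, (f (x₀ + δ / 2) - f (x₀ - δ / 2)) ^ 2 ≤ (1 - θ t ^ 2) * δ ^ 2 := by
    intro δ
    have hlip : |f (x₀ + δ / 2) - f (x₀ - δ / 2)| ≤ ‖w (x₀ + δ / 2) - w (x₀ - δ / 2)‖ := by
      rw [hf, hf, ← Real.dist_eq, ← dist_eq_norm]
      simpa using hF.dist_le_mul (w (x₀ + δ / 2)) (w (x₀ - δ / 2))
    have hcoord : ∀ i, (w (x₀ + δ / 2) i - w (x₀ - δ / 2) i) ^ 2 ≤ θ i ^ 2 * δ ^ 2 := by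
      intro i
      have hd : v (x₀ + δ / 2) i - v (x₀ - δ / 2) i = θ i * δ := by rw [hv, hv]; ring
      rw [← mul_pow, ← hd, sq_le_sq, hw, hw]
      split_ifs
      · exact abs_abs_sub_abs_le_abs_sub _ _
      · exact le_rfl
    have hzero : w (x₀ + δ / 2) t - w (x₀ - δ / 2) t = 0 := by
      have hodd : v (x₀ + δ / 2) t = -v (x₀ - δ / 2) t := by
        rw [hv] at hx₀
        rw [hv, hv]
        linarith
      rw [hw, hw, if_pos ht, if_pos ht, hodd, abs_neg, sub_self]
    have hθsq : ∑ i, θ i ^ 2 ≤ 1 := by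
      rw [← EuclideanSpace.real_norm_sq_eq]
      exact pow_le_one₀ (norm_nonneg _) hθ
    calc (f (x₀ + δ / 2) - f (x₀ - δ / 2)) ^ 2
        ≤ ‖w (x₀ + δ / 2) - w (x₀ - δ / 2)‖ ^ 2 := by
          rw [← sq_abs]
          exact pow_le_pow_left₀ (abs_nonneg _) hlip 2
      _ = ∑ i, (w (x₀ + δ / 2) i - w (x₀ - δ / 2) i) ^ 2 := by
          simp [EuclideanSpace.real_norm_sq_eq]
      _ = ∑ i ∈ Finset.univ.erase t, (w (x₀ + δ / 2) i - w (x₀ - δ / 2) i) ^ 2 := by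
          rw [← Finset.add_sum_erase _ _ (Finset.mem_univ t), hzero]
          ring
      _ ≤ ∑ i ∈ Finset.univ.erase t, θ i ^ 2 * δ ^ 2 :=
          Finset.sum_le_sum fun i _ => hcoord i
      _ = (∑ i, θ i ^ 2 - θ t ^ 2) * δ ^ 2 := by
          rw [← Finset.sum_mul, ← Finset.add_sum_erase _ _ (Finset.mem_univ t)]
          ring
      _ ≤ (1 - θ t ^ 2) * δ ^ 2 := by gcongr
  refine ⟨key, fun hN => ?_⟩
  have hpos : 0 < θ t ^ 2 := by positivity
  -- `δ` is large enough for both points to lie on the outer branches of the N-function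
  -- and for `θ_t² δ > 4`.
  obtain ⟨δ, hδ₁, hδ₂⟩ : ∃ δ : ℝ, 2 * |x₀| + 2 ≤ δ ∧ 4 < θ t ^ 2 * δ := by
    have hq : 0 < 5 / θ t ^ 2 := by positivity
    have hm : θ t ^ 2 * (5 / θ t ^ 2) = 5 := by field_simp
    refine ⟨2 * |x₀| + 2 + 5 / θ t ^ 2, by linarith, ?_⟩
    have := mul_nonneg hpos.le (by positivity : 0 ≤ 2 * |x₀| + 2)
    rw [mul_add, hm]
    linarith
  have hxl := neg_abs_le x₀
  have hxr := le_abs_self x₀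
  have hδ : 0 < δ := by linarith [abs_nonneg x₀]
  have hright : Nfun (x₀ + δ / 2) = x₀ + δ / 2 - 1 := by
    rw [Nfun, if_neg (by linarith), if_neg (by linarith)]
  have hleft : Nfun (x₀ - δ / 2) = x₀ - δ / 2 + 1 := by
    rw [Nfun, if_pos (by linarith)]
  have h := key δ
  rw [hN, hN, hright, hleft] at h
  nlinarith [mul_lt_mul_of_pos_right hδ₂ hδ]

end
end

section
/- The MaxMin activation factors through an orthogonal matrix and a partial absolute value: with M the 2×2 matrix (1/√2)·[[1, 1], [1, −1]] and σ: ℝ² → ℝ² defined by σ(a, b) = (a, |b|), the matrix M is orthogonal and for all x, y ∈ ℝ, M · σ(M · (x, y)ᵀ) = (max(x, y), min(x, y))ᵀ. -/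
/-! The entries of `M (a, b)` are `c (a + b)` and `c (a - b)` with `c = 1/√2`. As `c ≥ 0`, the
absolute value in `σ` passes through `c`, and `c² = 1/2` turns the two outputs into
`(x + y ± |x - y|) / 2`, which are the maximum and the minimum of `x` and `y`. -/

open Matrix

noncomputable section

/-- **MaxMin factors through an orthogonal matrix and a partial absolute value**:
with `M = (1/√2)·[[1,1],[1,−1]]` and `σ(a,b) = (a,|b|)`, `M` is orthogonal and
`M σ(M (x,y)ᵀ) = (max(x,y), min(x,y))ᵀ` for all `x, y`. -/
theorem maxMin_eq_orth_abs_orth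
    (M : Matrix (Fin 2) (Fin 2) ℝ) (hM : M = (Real.sqrt 2)⁻¹ • !![1, 1; 1, -1])
    (σ : (Fin 2 → ℝ) → (Fin 2 → ℝ)) (hσ : ∀ v, σ v = ![v 0, |v 1|]) :
    Mᵀ * M = 1 ∧
      ∀ x y : ℝ, M.mulVec (σ (M.mulVec ![x, y])) = ![max x y, min x y] := by
  have hc : (Real.sqrt 2)⁻¹ * (Real.sqrt 2)⁻¹ = (1 / 2 : ℝ) := by
    rw [← mul_inv, Real.mul_self_sqrt (by norm_num)]
    norm_num
  have hc0 : 0 ≤ (Real.sqrt 2)⁻¹ := by positivity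
  generalize (Real.sqrt 2)⁻¹ = c at hM hc hc0
  subst hM
  have hmul : ∀ a b : ℝ, (c • !![1, 1; 1, -1] : Matrix (Fin 2) (Fin 2) ℝ).mulVec ![a, b]
      = ![c * (a + b), c * (a - b)] := by
    intro a b
    ext i
    fin_cases i <;> simp [Matrix.mulVec, dotProduct, Fin.sum_univ_two] <;> ring
  refine ⟨?_, fun x y => ?_⟩
  · ext i j
    fin_cases i <;> fin_cases j <;> simp [Matrix.mul_apply, Fin.sum_univ_two] <;> linarith
  · have hs : σ ![c * (x + y), c * (x - y)] = ![c * (x + y), c * |x - y|] := by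
      rw [hσ]
      simp [abs_mul, abs_of_nonneg hc0]
    rw [hmul, hs, hmul]
    -- Since `c * c = 1 / 2`, the two entries are `(x + y ± |x - y|) / 2`.
    rcases le_total x y with h | h
    · rw [max_eq_right h, min_eq_left h, abs_of_nonpos (sub_nonpos.2 h)]
      congr 1
      · linear_combination 2 * y * hc
      · congr 1
        linear_combination 2 * x * hc
    · rw [max_eq_left h, min_eq_right h, abs_of_nonneg (sub_nonneg.2 h)]
      congr 1
      · linear_combination 2 * x * hc
      · congr 1
        linear_combination 2 * y * hc

end
end

section
/- Slope-bending identity used in the universality construction: let α, β ∈ ℝ with β ≥ 0 and α² + β² = 1, set s = α² − β², and let t1 ≤ t2 be reals. Define T: ℝ → ℝ by T(y) = α² y + β · N(β y; β t1, β t2). Then T(y) = y − 2β² t1 for y ≤ t1, T(y) = s·y for t1 ≤ y ≤ t2, and T(y) = y − 2β² t2 for y ≥ t2; in particular T is continuous and 1-Lipschitz. -/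
/-!
The three formulas combine into `T y = y - 2 β² c(y)`, where `c(y) = max t1 (min y t2)` is the
projection of `y` onto `[t1, t2]`; this is `slope_bending_closed_form`. The projection is
nondecreasing and nonexpansive, so for `x ≤ y` the increment `c(y) - c(x)` lies in `[0, y - x]`.
Since `0 ≤ 2 β² ≤ 2`, the increment of `T` then lies in `[-(y - x), y - x]`, which is the
Lipschitz bound, and continuity follows.
-/

noncomputable section

/-- The N-activation with parameters `θ1 θ2`. -/
def Nact (θ1 θ2 x : ℝ) : ℝ :=
  if x ≤ min θ1 θ2 then x - 2 * min θ1 θ2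
  else if x ≤ max θ1 θ2 then -x
  else x - 2 * max θ1 θ2

/-- The factor `β` in front makes this hold at `β = 0` as well, where both sides vanish. -/
theorem mul_Nact_mul {β t1 t2 : ℝ} (hβ : 0 ≤ β) (ht : t1 ≤ t2) (y : ℝ) :
    β * Nact (β * t1) (β * t2) (β * y) = β ^ 2 * (y - 2 * max t1 (min y t2)) := by
  rcases hβ.eq_or_lt with rfl | hpos
  · simp
  have hb : β * t1 ≤ β * t2 := mul_le_mul_of_nonneg_left ht hβ
  simp only [Nact, min_eq_left hb, max_eq_right hb, mul_le_mul_iff_right₀ hpos]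
  split_ifs with h1 h2
  · rw [min_eq_left (h1.trans ht), max_eq_left h1]; ring
  · rw [min_eq_left h2, max_eq_right (not_le.1 h1).le]; ring
  · rw [min_eq_right (not_le.1 h2).le, max_eq_right ht]; ring

theorem slope_bending_closed_form {α β t1 t2 : ℝ} (hβ : 0 ≤ β) (hαβ : α ^ 2 + β ^ 2 = 1)
    (ht : t1 ≤ t2) (y : ℝ) :
    α ^ 2 * y + β * Nact (β * t1) (β * t2) (β * y) = y - 2 * β ^ 2 * max t1 (min y t2) := by
  rw [mul_Nact_mul hβ ht]
  linear_combination y * hαβ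

theorem clamp_sub_mem {t1 t2 x y : ℝ} (hxy : x ≤ y) :
    0 ≤ max t1 (min y t2) - max t1 (min x t2) ∧
      max t1 (min y t2) - max t1 (min x t2) ≤ y - x := by
  grind

/-- **Slope-bending identity**: for `α² + β² = 1`, `β ≥ 0`, `s = α² − β²`, `t1 ≤ t2`,
the map `T(y) = α² y + β · N(β y; β t1, β t2)` equals `y − 2β² t1` for `y ≤ t1`,
`s y` on `[t1, t2]`, and `y − 2β² t2` for `y ≥ t2`; in particular it is continuous
and 1-Lipschitz. -/
theorem slope_bending_identity (α β s t1 t2 : ℝ)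
    (hβ : 0 ≤ β) (hαβ : α ^ 2 + β ^ 2 = 1) (hs : s = α ^ 2 - β ^ 2) (ht : t1 ≤ t2)
    (T : ℝ → ℝ) (hT : ∀ y, T y = α ^ 2 * y + β * Nact (β * t1) (β * t2) (β * y)) :
    (∀ y ≤ t1, T y = y - 2 * β ^ 2 * t1) ∧
      (∀ y, t1 ≤ y → y ≤ t2 → T y = s * y) ∧
      (∀ y, t2 ≤ y → T y = y - 2 * β ^ 2 * t2) ∧
      Continuous T ∧ LipschitzWith 1 T := by
  have hT' : ∀ y, T y = y - 2 * β ^ 2 * max t1 (min y t2) := fun y =>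
    (hT y).trans (slope_bending_closed_form hβ hαβ ht y)
  have key : ∀ x y, x ≤ y → |T x - T y| ≤ |x - y| := by
    intro x y hxy
    obtain ⟨h0, h1⟩ := clamp_sub_mem (t1 := t1) (t2 := t2) hxy
    have hβ1 : β ^ 2 ≤ 1 := by nlinarith [sq_nonneg α]
    have h2 := mul_nonneg (sq_nonneg β) h0
    have h3 := mul_le_of_le_one_left h0 hβ1
    rw [hT', hT', abs_of_nonpos (sub_nonpos.2 hxy), abs_le]
    constructor <;> linarith
  have hLip : LipschitzWith 1 T := by
    refine LipschitzWith.of_dist_le_mul fun x y => ?_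
    rw [NNReal.coe_one, one_mul, Real.dist_eq, Real.dist_eq]
    rcases le_total x y with h | h
    · exact key x y h
    · rw [abs_sub_comm (T x), abs_sub_comm x]
      exact key y x h
  refine ⟨fun y hy => ?_, fun y h1 h2 => ?_, fun y hy => ?_, hLip.continuous, hLip⟩
  · rw [hT', min_eq_left (hy.trans ht), max_eq_left hy]
  · rw [hT', min_eq_left h2, max_eq_right h1, hs]
    linear_combination -y * hαβ
  · rw [hT', min_eq_right hy, max_eq_right ht]

end
end
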